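/- Let μ₁, ν₁, μ₂, ν₂ > 0, set a_k = μ_k + ν_k, r_k = √(μ_k ν_k), and R = μ₁ν₁μ₂ν₂, let θ > 0 satisfy θ·r₁·r₂ < 1, and let β > 0, c₁, c₂ be real constants. Then the covariance expression of the main theorem with p₁ = p₂ = 2, namely (4c₁·2·2/(β(iπ)²)) · ∮∮_{upper semicircles, radii r₁, r₂} (a₁ + 2Re ζ₁)(a₂ + 2Re ζ₂)·log| (θ^{-1} − ζ₁ζ₂)/(θ^{-1} − ζ₁·conj(ζ₂)) |·(Im ζ₁/ζ₁)(Im ζ₂/ζ₂) dζ₁ dζ₂ + (4(c₂ − 1 − 2β^{-1}c₁)·θ·2·2/(πi)²) · ∮∮_{upper semicircles, radii r₁, r₂} (a₁ + 2Re ζ₁)(a₂ + 2Re ζ₂)·((Im ζ₁)²/ζ₁)·((Im ζ₂)²/ζ₂) dζ₁ dζ₂, equals 2·c₁·β^{-1}·θ·R·(4·a₁·a₂ + 2·θ·R) + 4·(c₂ − 1 − 2β^{-1}c₁)·θ·R·a₁·a₂. -/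

import Mathlib

open Complex Real

/-- The iterated contour integral `∮∮ f(ζ₁,ζ₂) dζ₁ dζ₂` over upper semicircles of radii
`r₁` and `r₂` centered at the origin. -/
noncomputable def semicircleIntegral2 (f : ℂ → ℂ → ℂ) (r₁ r₂ : ℝ) : ℂ :=
  ∫ t₁ in (0 : ℝ)..π, ∫ t₂ in (0 : ℝ)..π,
    f ((r₁ : ℂ) * Complex.exp (Complex.I * t₁)) ((r₂ : ℂ) * Complex.exp (Complex.I * t₂)) *
      (Complex.I * r₁ * Complex.exp (Complex.I * t₁)) *
      (Complex.I * r₂ * Complex.exp (Complex.I * t₂))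

/-!
On the circles `ζ_k = r_k e^{it_k}` put `q = θ r₁ r₂`. As `Re (z w̄) - Re (z w) = 2 Im z Im w`, the
Taylor series of `-log (1 - ·)` expands the logarithmic kernel in products of sines,
`log |(θ⁻¹ - ζ₁ζ₂) / (θ⁻¹ - ζ₁ζ̄₂)| = ∑ₙ 2 qⁿ/n · sin (n t₁) · sin (n t₂)`.
Since `dζ/ζ = i dt`, both contour integrals are integrals over `[0, π]²` against the weights
`(a + 2 Re ζ) Im ζ = a r sin t + r² sin 2t`, so by orthogonality of the sines only the terms
`n = 1, 2` survive in the first and only the frequency `1` in the second.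
-/

open MeasureTheory

lemma semicircleIntegral2_ofReal_div (F : ℂ → ℂ → ℝ) {r₁ r₂ : ℝ} (hr₁ : r₁ ≠ 0) (hr₂ : r₂ ≠ 0) :
    semicircleIntegral2 (fun ζ₁ ζ₂ => (F ζ₁ ζ₂ : ℂ) / (ζ₁ * ζ₂)) r₁ r₂ =
      ((-∫ s in (0 : ℝ)..π, ∫ t in (0 : ℝ)..π,
        F (circleMap 0 r₁ s) (circleMap 0 r₂ t) : ℝ) : ℂ) := by
  have integrand_eq (s t : ℝ) :
      (F (r₁ * Complex.exp (I * s)) (r₂ * Complex.exp (I * t)) : ℂ) /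
          (r₁ * Complex.exp (I * s) * (r₂ * Complex.exp (I * t))) *
          (I * r₁ * Complex.exp (I * s)) * (I * r₂ * Complex.exp (I * t)) =
        ((-F (circleMap 0 r₁ s) (circleMap 0 r₂ t) : ℝ) : ℂ) := by
    have hζ₁ : circleMap 0 r₁ s ≠ 0 := circleMap_ne_center hr₁
    have hζ₂ : circleMap 0 r₂ t ≠ 0 := circleMap_ne_center hr₂
    simp only [mul_comm I (s : ℂ), mul_comm I (t : ℂ), mul_assoc I, ← circleMap_zero]
    field_simp
    rw [I_sq, ofReal_neg, mul_neg_one]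
  simp only [semicircleIntegral2, integrand_eq, intervalIntegral.integral_ofReal,
    intervalIntegral.integral_neg]

section SineMoments

lemma integral_cos_int_mul (m : ℤ) :
    ∫ t in (0 : ℝ)..π, Real.cos (m * t) = if m = 0 then π else 0 := by
  split_ifs with hm
  · simp [hm]
  · simp [intervalIntegral.integral_comp_mul_left Real.cos (Int.cast_ne_zero.2 hm),
      Real.sin_int_mul_pi]

lemma integral_sin_nat_mul_mul_sin_nat_mul {m : ℕ} (hm : m ≠ 0) (n : ℕ) :
    ∫ t in (0 : ℝ)..π, Real.sin (m * t) * Real.sin (n * t) = if n = m then π / 2 else 0 := by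
  have product_to_sum (t : ℝ) : Real.sin (m * t) * Real.sin (n * t) =
      (Real.cos (((m - n : ℤ) : ℝ) * t) - Real.cos (((m + n : ℤ) : ℝ) * t)) / 2 := by
    push_cast
    rw [sub_mul, add_mul, ← Real.two_mul_sin_mul_sin]
    ring
  have cos_integrable (k : ℤ) : IntervalIntegrable (fun t : ℝ => Real.cos (k * t)) volume 0 π :=
    (by fun_prop : Continuous _).intervalIntegrable _ _
  simp only [product_to_sum, intervalIntegral.integral_div]
  rw [intervalIntegral.integral_sub (cos_integrable _) (cos_integrable _), integral_cos_int_mul,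
    integral_cos_int_mul, if_neg (by omega : (m + n : ℤ) ≠ 0), sub_zero, ite_div, zero_div]
  exact if_congr (by omega) rfl rfl

/-- The `n`-th (unnormalised) Fourier sine coefficient of `g` on `[0, π]`. -/
noncomputable def sineMoment (g : ℝ → ℝ) (n : ℕ) : ℝ :=
  ∫ t in (0 : ℝ)..π, g t * Real.sin (n * t)

lemma abs_sineMoment_le {g : ℝ → ℝ} (hg : IntervalIntegrable g volume 0 π) (n : ℕ) :
    |sineMoment g n| ≤ ∫ t in (0 : ℝ)..π, |g t| := by
  refine intervalIntegral.norm_integral_le_of_norm_le (f := fun t => g t * Real.sin (n * t))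
    Real.pi_nonneg (.of_forall fun t _ => ?_) hg.abs
  rw [norm_mul]
  exact mul_le_of_le_one_right (abs_nonneg _) (Real.abs_sin_le_one _)

/-- The density `(a + 2 Re ζ) Im ζ` by which each variable enters the covariance integrals once
`dζ / ζ` is replaced by `i dt`. -/
def covarianceWeight (a : ℝ) (ζ : ℂ) : ℝ := (a + 2 * ζ.re) * ζ.im

lemma continuous_covarianceWeight_circleMap (a r : ℝ) :
    Continuous fun t => covarianceWeight a (circleMap 0 r t) := by
  unfold covarianceWeight
  fun_prop

lemma sineMoment_covarianceWeight (a r : ℝ) (n : ℕ) :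
    sineMoment (fun t => covarianceWeight a (circleMap 0 r t)) n =
      a * r * (if n = 1 then π / 2 else 0) + r ^ 2 * (if n = 2 then π / 2 else 0) := by
  have weight_mul_sin (t : ℝ) : covarianceWeight a (circleMap 0 r t) * Real.sin (n * t) =
      a * r * (Real.sin ((1 : ℕ) * t) * Real.sin (n * t)) +
        r ^ 2 * (Real.sin ((2 : ℕ) * t) * Real.sin (n * t)) := by
    rw [covarianceWeight, circleMap_zero_re, circleMap_zero_im, Nat.cast_one, one_mul,
      Nat.cast_two, Real.sin_two_mul]
    ring
  simp only [sineMoment, weight_mul_sin]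
  rw [intervalIntegral.integral_add ((by fun_prop : Continuous _).intervalIntegrable _ _)
      ((by fun_prop : Continuous _).intervalIntegrable _ _),
    intervalIntegral.integral_const_mul, intervalIntegral.integral_const_mul,
    integral_sin_nat_mul_mul_sin_nat_mul one_ne_zero,
    integral_sin_nat_mul_mul_sin_nat_mul two_ne_zero]

end SineMoments

section LogKernel

/-- The logarithmic kernel `log |(θ⁻¹ - ζ₁ζ₂) / (θ⁻¹ - ζ₁ζ̄₂)|` of the covariance. -/
noncomputable def logKernel (θ : ℝ) (ζ₁ ζ₂ : ℂ) : ℝ :=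
  Real.log ‖((θ : ℂ)⁻¹ - ζ₁ * ζ₂) / ((θ : ℂ)⁻¹ - ζ₁ * (starRingEnd ℂ) ζ₂)‖

lemma hasSum_neg_log_norm_one_sub {z : ℂ} (hz : ‖z‖ < 1) :
    HasSum (fun n : ℕ => (z ^ n).re / n) (-Real.log ‖1 - z‖) := by
  simpa only [div_natCast_re, neg_re, log_re] using hasSum_re (hasSum_taylorSeries_neg_log hz)

lemma hasSum_logKernel {θ : ℝ} (hθ : θ ≠ 0) {ζ₁ ζ₂ : ℂ} (h : |θ| * ‖ζ₁‖ * ‖ζ₂‖ < 1) :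
    HasSum (fun n : ℕ => 2 * θ ^ n / n * (ζ₁ ^ n).im * (ζ₂ ^ n).im) (logKernel θ ζ₁ ζ₂) := by
  have hθ' : (θ : ℂ) ≠ 0 := ofReal_ne_zero.2 hθ
  have norm_lt (w : ℂ) (hw : ‖w‖ = ‖ζ₂‖) : ‖θ * ζ₁ * w‖ < 1 := by
    rwa [norm_mul, norm_mul, norm_real, Real.norm_eq_abs, hw]
  have norm_one_sub_ne_zero (w : ℂ) (hw : ‖w‖ = ‖ζ₂‖) : ‖1 - θ * ζ₁ * w‖ ≠ 0 := by
    rw [norm_ne_zero_iff, sub_ne_zero]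
    intro h_one
    simpa [← h_one] using norm_lt w hw
  have factor (w : ℂ) : (θ : ℂ)⁻¹ - ζ₁ * w = (θ : ℂ)⁻¹ * (1 - θ * ζ₁ * w) := by
    field_simp
  have logKernel_eq : logKernel θ ζ₁ ζ₂ =
      -Real.log ‖1 - θ * ζ₁ * (starRingEnd ℂ) ζ₂‖ - -Real.log ‖1 - θ * ζ₁ * ζ₂‖ := by
    rw [logKernel, factor, factor, mul_div_mul_left _ _ (inv_ne_zero hθ'), norm_div,
      Real.log_div (norm_one_sub_ne_zero _ rfl) (norm_one_sub_ne_zero _ (norm_conj _)),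
      neg_sub_neg]
  have coeff_eq (n : ℕ) : 2 * θ ^ n / n * (ζ₁ ^ n).im * (ζ₂ ^ n).im =
      ((θ * ζ₁ * (starRingEnd ℂ) ζ₂) ^ n).re / n - ((θ * ζ₁ * ζ₂) ^ n).re / n := by
    simp only [mul_pow, ← map_pow, ← ofReal_pow, mul_assoc]
    rw [re_ofReal_mul, re_ofReal_mul, mul_re, mul_re, conj_re, conj_im]
    ring
  simpa only [logKernel_eq, coeff_eq] using
    (hasSum_neg_log_norm_one_sub (norm_lt _ (norm_conj _))).sub
      (hasSum_neg_log_norm_one_sub (norm_lt _ rfl))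

lemma hasSum_logKernel_circleMap {θ r₁ r₂ : ℝ} (hθ : θ ≠ 0) (h : |θ * r₁ * r₂| < 1) (s t : ℝ) :
    HasSum (fun n : ℕ => 2 * (θ * r₁ * r₂) ^ n / n * Real.sin (n * s) * Real.sin (n * t))
      (logKernel θ (circleMap 0 r₁ s) (circleMap 0 r₂ t)) := by
  convert hasSum_logKernel hθ (ζ₁ := circleMap 0 r₁ s) (ζ₂ := circleMap 0 r₂ t)
    (by simpa only [norm_circleMap_zero, abs_mul] using h) using 2 with n
  simp only [circleMap_zero_pow, circleMap_zero_im]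
  ring

end LogKernel

section TermwiseIntegration

lemma hasSum_intervalIntegral_mul_of_norm_le {A ι : Type*} [NormedRing A] [NormedAlgebra ℝ A]
    [Countable ι] {μ : Measure ℝ} {a b : ℝ} {g : ℝ → A} (hg : IntervalIntegrable g μ a b)
    {u : ι → ℝ → A} {S : ℝ → A} {c : ι → ℝ} (hu : ∀ n, Continuous (u n)) (hc : Summable c)
    (hbound : ∀ n t, ‖u n t‖ ≤ c n) (hS : ∀ t, HasSum (fun n => u n t) (S t)) :
    HasSum (fun n => ∫ t in a..b, g t * u n t ∂μ) (∫ t in a..b, g t * S t ∂μ) := by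
  refine intervalIntegral.hasSum_integral_of_dominated_convergence (fun n t => ‖g t‖ * c n)
    (fun n => hg.def'.aestronglyMeasurable.mul (hu n).aestronglyMeasurable)
    (fun n => .of_forall fun t _ => ?_) (.of_forall fun t _ => hc.mul_left _) ?_
    (.of_forall fun t _ => (hS t).mul_left _)
  · exact (norm_mul_le _ _).trans (mul_le_mul_of_nonneg_left (hbound n t) (norm_nonneg _))
  · simpa only [tsum_mul_left] using hg.norm.mul_const _

lemma abs_two_mul_pow_div_mul_sin_mul_le (q x : ℝ) (n : ℕ) {y C : ℝ} (hy : |y| ≤ C) :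
    |2 * q ^ n / n * Real.sin x * y| ≤ 2 * |q| ^ n * C := by
  have coeff_le : |2 * q ^ n / n| ≤ 2 * |q| ^ n := by
    rw [abs_div, abs_mul, abs_pow, abs_two, Nat.abs_cast]
    exact div_nat_le_self_of_nonnneg (by positivity) n
  rw [abs_mul, abs_mul]
  exact mul_le_mul
    ((mul_le_of_le_one_right (abs_nonneg _) (Real.abs_sin_le_one x)).trans coeff_le)
    hy (abs_nonneg y) (by positivity)

lemma summable_two_mul_abs_pow_mul {q : ℝ} (hq : |q| < 1) (C : ℝ) :
    Summable fun n : ℕ => 2 * |q| ^ n * C :=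
  ((summable_geometric_of_lt_one (abs_nonneg q) hq).mul_left 2).mul_right C

lemma hasSum_integral_mul_logKernel {g : ℝ → ℝ} (hg : IntervalIntegrable g volume 0 π)
    {θ r₁ r₂ : ℝ} (hθ : θ ≠ 0) (h : |θ * r₁ * r₂| < 1) (s : ℝ) :
    HasSum (fun n : ℕ => 2 * (θ * r₁ * r₂) ^ n / n * Real.sin (n * s) * sineMoment g n)
      (∫ t in (0 : ℝ)..π, g t * logKernel θ (circleMap 0 r₁ s) (circleMap 0 r₂ t)) := by
  have term_eq (n : ℕ) : 2 * (θ * r₁ * r₂) ^ n / n * Real.sin (n * s) * sineMoment g n =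
      ∫ t in (0 : ℝ)..π,
        g t * (2 * (θ * r₁ * r₂) ^ n / n * Real.sin (n * s) * Real.sin (n * t)) := by
    rw [sineMoment, ← intervalIntegral.integral_const_mul]
    congr 1 with t
    ring
  simp only [term_eq]
  exact hasSum_intervalIntegral_mul_of_norm_le hg (fun n => by fun_prop)
    (summable_two_mul_abs_pow_mul h 1)
    (fun n t => abs_two_mul_pow_div_mul_sin_mul_le _ _ n (Real.abs_sin_le_one _))
    (hasSum_logKernel_circleMap hθ h s)

theorem hasSum_integral_integral_mul_logKernel {g₁ g₂ : ℝ → ℝ}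
    (hg₁ : IntervalIntegrable g₁ volume 0 π) (hg₂ : IntervalIntegrable g₂ volume 0 π)
    {θ r₁ r₂ : ℝ} (hθ : θ ≠ 0) (h : |θ * r₁ * r₂| < 1) :
    HasSum (fun n : ℕ => 2 * (θ * r₁ * r₂) ^ n / n * sineMoment g₁ n * sineMoment g₂ n)
      (∫ s in (0 : ℝ)..π, ∫ t in (0 : ℝ)..π,
        g₁ s * (g₂ t * logKernel θ (circleMap 0 r₁ s) (circleMap 0 r₂ t))) := by
  have term_eq (n : ℕ) :
      2 * (θ * r₁ * r₂) ^ n / n * sineMoment g₁ n * sineMoment g₂ n = ∫ s in (0 : ℝ)..π,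
        g₁ s * (2 * (θ * r₁ * r₂) ^ n / n * Real.sin (n * s) * sineMoment g₂ n) := by
    rw [mul_right_comm, sineMoment.eq_def g₁, ← intervalIntegral.integral_const_mul]
    congr 1 with s
    ring
  simp only [term_eq, intervalIntegral.integral_const_mul]
  exact hasSum_intervalIntegral_mul_of_norm_le hg₁ (fun n => by fun_prop)
    (summable_two_mul_abs_pow_mul h _)
    (fun n s => abs_two_mul_pow_div_mul_sin_mul_le _ _ n (abs_sineMoment_le hg₂ n))
    (hasSum_integral_mul_logKernel hg₂ hθ h)

end TermwiseIntegration

section CovarianceIntegrals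

lemma integral_integral_covarianceWeight_mul_logKernel (a₁ a₂ : ℝ) {θ r₁ r₂ : ℝ} (hθ : θ ≠ 0)
    (h : |θ * r₁ * r₂| < 1) :
    ∫ s in (0 : ℝ)..π, ∫ t in (0 : ℝ)..π, covarianceWeight a₁ (circleMap 0 r₁ s) *
        (covarianceWeight a₂ (circleMap 0 r₂ t) *
          logKernel θ (circleMap 0 r₁ s) (circleMap 0 r₂ t)) =
      π ^ 2 / 4 * θ * (r₁ * r₂) ^ 2 * (2 * a₁ * a₂ + θ * (r₁ * r₂) ^ 2) := by
  have series := hasSum_integral_integral_mul_logKernel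
    ((continuous_covarianceWeight_circleMap a₁ r₁).intervalIntegrable _ _)
    ((continuous_covarianceWeight_circleMap a₂ r₂).intervalIntegrable _ _) hθ h
  simp only [sineMoment_covarianceWeight] at series
  rw [series.unique (hasSum_sum_of_ne_finset_zero (s := {1, 2}) fun n hn => ?_)]
  · norm_num
    ring
  · obtain ⟨hn₁, hn₂⟩ : n ≠ 1 ∧ n ≠ 2 := by simpa using hn
    simp [hn₁, hn₂]

lemma semicircleIntegral2_weight_mul_log (a₁ a₂ : ℝ) {θ r₁ r₂ : ℝ} (hr₁ : r₁ ≠ 0) (hr₂ : r₂ ≠ 0)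
    (hθ : θ ≠ 0) (h : |θ * r₁ * r₂| < 1) :
    semicircleIntegral2
        (fun ζ₁ ζ₂ =>
          ((a₁ : ℂ) + 2 * (ζ₁.re : ℂ)) * ((a₂ : ℂ) + 2 * (ζ₂.re : ℂ)) *
            (Real.log ‖((θ : ℂ)⁻¹ - ζ₁ * ζ₂) / ((θ : ℂ)⁻¹ - ζ₁ * (starRingEnd ℂ) ζ₂)‖ : ℂ) *
            ((ζ₁.im : ℂ) / ζ₁) * ((ζ₂.im : ℂ) / ζ₂))
        r₁ r₂ =
      ((-(π ^ 2 / 4 * θ * (r₁ * r₂) ^ 2 * (2 * a₁ * a₂ + θ * (r₁ * r₂) ^ 2)) : ℝ) : ℂ) := by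
  rw [← integral_integral_covarianceWeight_mul_logKernel a₁ a₂ hθ h,
    ← semicircleIntegral2_ofReal_div (fun ζ₁ ζ₂ => covarianceWeight a₁ ζ₁ *
      (covarianceWeight a₂ ζ₂ * logKernel θ ζ₁ ζ₂)) hr₁ hr₂]
  congr 1 with ζ₁ ζ₂
  simp only [covarianceWeight, logKernel]
  push_cast
  ring

lemma integral_covarianceWeight_mul_im (a r : ℝ) :
    ∫ t in (0 : ℝ)..π, covarianceWeight a (circleMap 0 r t) * (circleMap 0 r t).im =
      π / 2 * a * r ^ 2 := by
  calc ∫ t in (0 : ℝ)..π, covarianceWeight a (circleMap 0 r t) * (circleMap 0 r t).im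
      = r * sineMoment (fun t => covarianceWeight a (circleMap 0 r t)) 1 := by
        rw [sineMoment, ← intervalIntegral.integral_const_mul]
        congr 1 with t
        rw [circleMap_zero_im, Nat.cast_one, one_mul, mul_left_comm]
    _ = π / 2 * a * r ^ 2 := by
        rw [sineMoment_covarianceWeight, if_pos rfl, if_neg (by norm_num)]
        ring

lemma semicircleIntegral2_weight_mul_im_sq (a₁ a₂ : ℝ) {r₁ r₂ : ℝ} (hr₁ : r₁ ≠ 0) (hr₂ : r₂ ≠ 0) :
    semicircleIntegral2
        (fun ζ₁ ζ₂ =>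
          ((a₁ : ℂ) + 2 * (ζ₁.re : ℂ)) * ((a₂ : ℂ) + 2 * (ζ₂.re : ℂ)) *
            ((ζ₁.im : ℂ) ^ 2 / ζ₁) * ((ζ₂.im : ℂ) ^ 2 / ζ₂))
        r₁ r₂ =
      ((-(π / 2 * a₁ * r₁ ^ 2 * (π / 2 * a₂ * r₂ ^ 2)) : ℝ) : ℂ) := by
  rw [← integral_covarianceWeight_mul_im a₁ r₁, ← integral_covarianceWeight_mul_im a₂ r₂,
    ← intervalIntegral.integral_mul_const]
  simp only [← intervalIntegral.integral_const_mul]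
  rw [← semicircleIntegral2_ofReal_div (fun ζ₁ ζ₂ => covarianceWeight a₁ ζ₁ * ζ₁.im *
      (covarianceWeight a₂ ζ₂ * ζ₂.im)) hr₁ hr₂]
  congr 1 with ζ₁ ζ₂
  simp only [covarianceWeight]
  push_cast
  ring

end CovarianceIntegrals

theorem covariance_formula_p_two_general (a₁ a₂ c₁ c₂ : ℝ) {r₁ r₂ R θ β : ℝ}
    (hr₁ : r₁ ≠ 0) (hr₂ : r₂ ≠ 0) (hR : R = (r₁ * r₂) ^ 2) (hθ : θ ≠ 0) (hβ : β ≠ 0)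
    (h : |θ * r₁ * r₂| < 1) :
    ((4 * c₁ * 2 * 2 : ℂ) / (β * (Complex.I * π) ^ 2)) *
        semicircleIntegral2
          (fun ζ₁ ζ₂ =>
            ((a₁ : ℂ) + 2 * (ζ₁.re : ℂ)) * ((a₂ : ℂ) + 2 * (ζ₂.re : ℂ)) *
              ((Real.log (norm
                  ((((θ : ℂ))⁻¹ - ζ₁ * ζ₂) / (((θ : ℂ))⁻¹ - ζ₁ * (starRingEnd ℂ) ζ₂))) : ℂ)) *
              ((ζ₁.im : ℂ) / ζ₁) * ((ζ₂.im : ℂ) / ζ₂))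
          r₁ r₂ +
      ((4 * (c₂ - 1 - 2 * β⁻¹ * c₁) * θ * 2 * 2 : ℂ) / (π * Complex.I) ^ 2) *
        semicircleIntegral2
          (fun ζ₁ ζ₂ =>
            ((a₁ : ℂ) + 2 * (ζ₁.re : ℂ)) * ((a₂ : ℂ) + 2 * (ζ₂.re : ℂ)) *
              ((ζ₁.im : ℂ) ^ 2 / ζ₁) * ((ζ₂.im : ℂ) ^ 2 / ζ₂))
          r₁ r₂ =
      ((2 * c₁ * β⁻¹ * θ * R * (4 * a₁ * a₂ + 2 * θ * R)
        + 4 * (c₂ - 1 - 2 * β⁻¹ * c₁) * θ * R * a₁ * a₂ : ℝ) : ℂ) := by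
  rw [semicircleIntegral2_weight_mul_log a₁ a₂ hr₁ hr₂ hθ h,
    semicircleIntegral2_weight_mul_im_sq a₁ a₂ hr₁ hr₂, hR, mul_comm (π : ℂ) I, mul_pow, I_sq]
  have hπ : (π : ℂ) ≠ 0 := ofReal_ne_zero.2 Real.pi_ne_zero
  have hβ' : (β : ℂ) ≠ 0 := ofReal_ne_zero.2 hβ
  push_cast
  field_simp
  ring

/-- The covariance expression of the main theorem for `p₁ = p₂ = 2` evaluates to
`2c₁β⁻¹θR(4a₁a₂ + 2θR) + 4(c₂ − 1 − 2β⁻¹c₁)θRa₁a₂` where `R = μ₁ν₁μ₂ν₂`. -/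
theorem covariance_formula_p_two
    (μ₁ ν₁ μ₂ ν₂ : ℝ) (hμ₁ : 0 < μ₁) (hν₁ : 0 < ν₁) (hμ₂ : 0 < μ₂) (hν₂ : 0 < ν₂)
    (θ : ℝ) (hθ : 0 < θ) (β c₁ c₂ : ℝ) (hβ : 0 < β)
    (a₁ a₂ r₁ r₂ R : ℝ) (ha₁ : a₁ = μ₁ + ν₁) (ha₂ : a₂ = μ₂ + ν₂)
    (hr₁ : r₁ = Real.sqrt (μ₁ * ν₁)) (hr₂ : r₂ = Real.sqrt (μ₂ * ν₂))
    (hR : R = μ₁ * ν₁ * μ₂ * ν₂)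
    (h : θ * r₁ * r₂ < 1) :
    ((4 * c₁ * 2 * 2 : ℂ) / (β * (Complex.I * π) ^ 2)) *
        semicircleIntegral2
          (fun ζ₁ ζ₂ =>
            ((a₁ : ℂ) + 2 * (ζ₁.re : ℂ)) * ((a₂ : ℂ) + 2 * (ζ₂.re : ℂ)) *
              ((Real.log (norm
                  ((((θ : ℂ))⁻¹ - ζ₁ * ζ₂) / (((θ : ℂ))⁻¹ - ζ₁ * (starRingEnd ℂ) ζ₂))) : ℂ)) *
              ((ζ₁.im : ℂ) / ζ₁) * ((ζ₂.im : ℂ) / ζ₂))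
          r₁ r₂ +
      ((4 * (c₂ - 1 - 2 * β⁻¹ * c₁) * θ * 2 * 2 : ℂ) / (π * Complex.I) ^ 2) *
        semicircleIntegral2
          (fun ζ₁ ζ₂ =>
            ((a₁ : ℂ) + 2 * (ζ₁.re : ℂ)) * ((a₂ : ℂ) + 2 * (ζ₂.re : ℂ)) *
              ((ζ₁.im : ℂ) ^ 2 / ζ₁) * ((ζ₂.im : ℂ) ^ 2 / ζ₂))
          r₁ r₂ =
      ((2 * c₁ * β⁻¹ * θ * R * (4 * a₁ * a₂ + 2 * θ * R)
        + 4 * (c₂ - 1 - 2 * β⁻¹ * c₁) * θ * R * a₁ * a₂ : ℝ) : ℂ) := by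
  have hr₁_pos : 0 < r₁ := hr₁ ▸ Real.sqrt_pos.2 (mul_pos hμ₁ hν₁)
  have hr₂_pos : 0 < r₂ := hr₂ ▸ Real.sqrt_pos.2 (mul_pos hμ₂ hν₂)
  have hR_sq : R = (r₁ * r₂) ^ 2 := by
    rw [hR, mul_pow, hr₁, hr₂, Real.sq_sqrt (by positivity), Real.sq_sqrt (by positivity)]
    ring
  exact covariance_formula_p_two_general a₁ a₂ c₁ c₂ hr₁_pos.ne' hr₂_pos.ne' hR_sq hθ.ne' hβ.ne'
    (by rwa [abs_of_pos (by positivity)])
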